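/- For every τ = x + iy ∈ ℍ with x ≠ 0, one has 𝒟^{2k−1}(φ̂)(τ) = −((2k−2)!/(4π)^{2k−1}) · τ^{−k}, where 𝒟^{2k−1} is the (2k−1)-fold iterate of 𝒟 := (1/(2πi))·∂/∂τ. -/

import Mathlib

noncomputable section

open MeasureTheory

/-- The set of integral binary quadratic forms `[a,b,c]` of discriminant `D`. -/
def QD (D : ℤ) : Set (ℤ × ℤ × ℤ) := {q | q.2.1 ^ 2 - 4 * q.1 * q.2.2 = D}

/-- `Q(τ,1) = a τ² + b τ + c`. -/
def Qval (q : ℤ × ℤ × ℤ) (τ : ℂ) : ℂ :=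
  (q.1 : ℂ) * τ ^ 2 + (q.2.1 : ℂ) * τ + (q.2.2 : ℂ)

/-- `a|τ|² + b x + c` where `τ = x + iy`. -/
def Qell (q : ℤ × ℤ × ℤ) (τ : ℂ) : ℝ :=
  (q.1 : ℝ) * Complex.normSq τ + (q.2.1 : ℝ) * τ.re + (q.2.2 : ℝ)

/-- `ψ(v) = (1/2) ∫₀ᵛ u^(k-3/2) (1-u)^(-1/2) du`. -/
def psi (k : ℕ) (v : ℝ) : ℝ :=
  (1 / 2) * ∫ u in (0:ℝ)..v, u ^ ((k : ℝ) - 3 / 2) * (1 - u) ^ (-(1:ℝ) / 2)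

/-- real power of the integer `D`, as a complex number. -/
def Dpow (D : ℤ) (e : ℝ) : ℂ := (((D : ℝ) ^ e : ℝ) : ℂ)

/-- The summand of the series defining `F_{1-k,D}`. -/
def Fsummand (k : ℕ) (D : ℤ) (τ : ℂ) (q : ℤ × ℤ × ℤ) : ℂ :=
  ((Real.sign (Qell q τ) : ℝ) : ℂ) * Qval q τ ^ (k - 1) *
    ((psi k ((D : ℝ) * τ.im ^ 2 / Complex.normSq (Qval q τ)) : ℝ) : ℂ)

/-- `F_{1-k,D}`. -/
def F (k : ℕ) (D : ℤ) (τ : ℂ) : ℂ :=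
  (Dpow D (1 / 2 - (k : ℝ)) / (((Nat.choose (2 * k - 2) (k - 1) : ℝ) * Real.pi : ℝ) : ℂ)) *
    ∑' q : QD D, Fsummand k D τ (q : ℤ × ℤ × ℤ)

/-- `f_{k,D}`. -/
def fkD (k : ℕ) (D : ℤ) (τ : ℂ) : ℂ :=
  (Dpow D ((k : ℝ) - 1 / 2) / (((Nat.choose (2 * k - 2) (k - 1) : ℝ) * Real.pi : ℝ) : ℂ)) *
    ∑' q : QD D, Qval (q : ℤ × ℤ × ℤ) τ ^ (-(k : ℤ))

/-- Action of `SL₂(ℤ)` on binary quadratic forms: `(Q ∘ γ)(X,Y) = Q(pX+qY, rX+sY)`. -/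
def QAct (q : ℤ × ℤ × ℤ) (γ : Matrix.SpecialLinearGroup (Fin 2) ℤ) : ℤ × ℤ × ℤ :=
  (q.1 * (γ.1 0 0) ^ 2 + q.2.1 * (γ.1 0 0) * (γ.1 1 0) + q.2.2 * (γ.1 1 0) ^ 2,
   2 * q.1 * (γ.1 0 0) * (γ.1 0 1) + q.2.1 * ((γ.1 0 0) * (γ.1 1 1) + (γ.1 0 1) * (γ.1 1 0))
     + 2 * q.2.2 * (γ.1 1 0) * (γ.1 1 1),
   q.1 * (γ.1 0 1) ^ 2 + q.2.1 * (γ.1 0 1) * (γ.1 1 1) + q.2.2 * (γ.1 1 1) ^ 2)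

/-- A narrow class: an orbit of the `SL₂(ℤ)`-action on `QD D`. -/
def IsNarrowClass (D : ℤ) (𝒜 : Set (ℤ × ℤ × ℤ)) : Prop :=
  ∃ q₀ ∈ QD D, 𝒜 = {q | ∃ γ : Matrix.SpecialLinearGroup (Fin 2) ℤ, QAct q₀ γ = q}

/-- `F_{1-k,D,𝒜}`. -/
def FA (k : ℕ) (D : ℤ) (𝒜 : Set (ℤ × ℤ × ℤ)) (τ : ℂ) : ℂ :=
  ((-1 : ℂ) ^ k * Dpow D (1 / 2 - (k : ℝ)) /
      (((Nat.choose (2 * k - 2) (k - 1) : ℝ) * Real.pi : ℝ) : ℂ)) *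
    ∑' q : 𝒜, Fsummand k D τ (q : ℤ × ℤ × ℤ)

/-- `f_{k,D,𝒜}`. -/
def fA (k : ℕ) (D : ℤ) (𝒜 : Set (ℤ × ℤ × ℤ)) (τ : ℂ) : ℂ :=
  ((-1 : ℂ) ^ k * Dpow D ((k : ℝ) - 1 / 2) /
      (((Nat.choose (2 * k - 2) (k - 1) : ℝ) * Real.pi : ℝ) : ℂ)) *
    ∑' q : 𝒜, Qval (q : ℤ × ℤ × ℤ) τ ^ (-(k : ℤ))

/-- Partial derivative in the real direction `x`. -/
def dxx (G : ℂ → ℂ) (τ : ℂ) : ℂ :=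
  deriv (fun x : ℝ => G ((x : ℂ) + (τ.im : ℂ) * Complex.I)) τ.re

/-- Partial derivative in the imaginary direction `y`. -/
def dyy (G : ℂ → ℂ) (τ : ℂ) : ℂ :=
  deriv (fun y : ℝ => G ((τ.re : ℂ) + (y : ℂ) * Complex.I)) τ.im

/-- Wirtinger derivative `∂/∂τ̄ = (1/2)(∂/∂x + i ∂/∂y)`. -/
def wirDbar (G : ℂ → ℂ) (τ : ℂ) : ℂ := (dxx G τ + Complex.I * dyy G τ) / 2

/-- Wirtinger derivative `∂/∂τ = (1/2)(∂/∂x - i ∂/∂y)`. -/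
def wirD (G : ℂ → ℂ) (τ : ℂ) : ℂ := (dxx G τ - Complex.I * dyy G τ) / 2

/-- The operator `ξ_{2-2k}(G)(τ) = 2 i y^{2-2k} conj(∂G/∂τ̄)`. -/
def xiOp (k : ℕ) (G : ℂ → ℂ) (τ : ℂ) : ℂ :=
  2 * Complex.I * (τ.im : ℂ) ^ ((2 : ℤ) - 2 * (k : ℤ)) * (starRingEnd ℂ) (wirDbar G τ)

/-- The operator `𝒟 = (1/(2πi)) ∂/∂τ`. -/
def Dop (G : ℂ → ℂ) : ℂ → ℂ := fun τ => (1 / (2 * (Real.pi : ℂ) * Complex.I)) * wirD G τ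

/-- The weight `2-2k` hyperbolic Laplacian. -/
def DeltaOp (k : ℕ) (G : ℂ → ℂ) (τ : ℂ) : ℂ :=
  -(τ.im : ℂ) ^ 2 * (dxx (fun z => dxx G z) τ + dyy (fun z => dyy G z) τ)
    + Complex.I * ((2 : ℂ) - 2 * (k : ℂ)) * (τ.im : ℂ) * (dxx G τ + Complex.I * dyy G τ)

/-- `φ(v) = ∫₀ᵛ sin(u)^{2k-2} du`. -/
def phi (k : ℕ) (v : ℝ) : ℝ := ∫ u in (0:ℝ)..v, Real.sin u ^ (2 * k - 2)

/-- `φ̂(τ) = τ^{k-1} sgn(x) φ(arctan|y/x|)`, with value `0` when `x = 0`. -/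
def phiHat (k : ℕ) (τ : ℂ) : ℂ :=
  τ ^ (k - 1) * ((Real.sign τ.re : ℝ) : ℂ) *
    ((phi k (Real.arctan |τ.im / τ.re|) : ℝ) : ℂ)

/-- The non-holomorphic Eichler integral
`f^*(τ) = (2i)^{1-2k} ∫_{-τ̄}^{i∞} conj(f(-z̄)) (z+τ)^{2k-2} dz`,
parametrized along the vertical path `z = -τ̄ + it`, `t ∈ (0,∞)`. -/
def fstar (k : ℕ) (f : ℂ → ℂ) (τ : ℂ) : ℂ :=
  (2 * Complex.I) ^ ((1 : ℤ) - 2 * (k : ℤ)) * Complex.I *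
    ∫ t in Set.Ioi (0 : ℝ), (starRingEnd ℂ) (f (τ + (t : ℂ) * Complex.I)) *
      (((2 * τ.im + t : ℝ) : ℂ) * Complex.I) ^ (2 * k - 2)

/-- `a : ℕ → ℂ` is the sequence of Fourier coefficients of `f` (with `a n` the
coefficient of `e^{2πi(n+1)τ}`). -/
def HasFourier (a : ℕ → ℂ) (f : ℂ → ℂ) : Prop :=
  ∀ τ : ℂ, 0 < τ.im →
    f τ = ∑' n : ℕ, a n * Complex.exp (2 * (Real.pi : ℂ) * Complex.I * ((n : ℂ) + 1) * τ)

/-- The holomorphic Eichler integral `ℰ_f(τ) = ∑_{n≥1} (a_n/n^{2k-1}) e^{2πinτ}`. -/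
def EichlerE (k : ℕ) (a : ℕ → ℂ) (τ : ℂ) : ℂ :=
  ∑' n : ℕ, a n / ((n : ℂ) + 1) ^ (2 * k - 1) *
    Complex.exp (2 * (Real.pi : ℂ) * Complex.I * ((n : ℂ) + 1) * τ)

/-- `r_{a,b}(𝒜) = 1_{[Q_{a,b} ∈ 𝒜]} + (-1)^k 1_{[-Q_{a,b} ∈ 𝒜]}`. -/
def rab (k : ℕ) (D : ℤ) (𝒜 : Set (ℤ × ℤ × ℤ)) (a b : ℤ) : ℝ :=
  Set.indicator 𝒜 1 (a, b, (b ^ 2 - D) / (4 * a)) +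
    (-1 : ℝ) ^ k * Set.indicator 𝒜 1 (-a, -b, -((b ^ 2 - D) / (4 * a)))

/-- The constant `c_∞(𝒜)`. -/
def cInftyA (k : ℕ) (D : ℤ) (𝒜 : Set (ℤ × ℤ × ℤ)) : ℝ :=
  -(1 / (2 ^ (2 * k - 2) * (2 * (k : ℝ) - 1) * (Nat.choose (2 * k - 2) (k - 1) : ℝ))) *
    ∑' n : ℕ, (1 / ((n : ℝ) + 1) ^ k) *
      ∑ b ∈ Finset.range (2 * (n + 1)),
        if (4 * ((n : ℤ) + 1)) ∣ ((b : ℤ) ^ 2 - D) then rab k D 𝒜 ((n : ℤ) + 1) (b : ℤ) else 0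

/-- The constant `c_∞`. -/
def cInfty (k : ℕ) (D : ℤ) : ℝ :=
  -(1 / (2 ^ (2 * k - 3) * (2 * (k : ℝ) - 1) * (Nat.choose (2 * k - 2) (k - 1) : ℝ))) *
    ∑' n : ℕ, (1 / ((n : ℝ) + 1) ^ k) *
      (((Finset.range (2 * (n + 1))).filter
        (fun b : ℕ => (4 * ((n : ℤ) + 1)) ∣ ((b : ℤ) ^ 2 - D))).card : ℝ)

/-- The weight `2-2k` Hecke operator `T_p`. -/
def heckeT (k : ℕ) (p : ℕ) (g : ℂ → ℂ) (τ : ℂ) : ℂ :=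
  (p : ℂ) ^ ((1 : ℤ) - 2 * (k : ℤ)) * g ((p : ℂ) * τ) +
    (p : ℂ)⁻¹ * ∑ r ∈ Finset.range p, g ((τ + (r : ℂ)) / (p : ℂ))

open scoped Classical in
/-- The symbol `(D|p)`. -/
def legSym (D : ℤ) (p : ℕ) : ℤ :=
  if (p : ℤ) ∣ D then 0
  else if p = 2 then (if D % 8 = 1 ∨ D % 8 = 7 then 1 else -1)
  else if ∃ m : ℤ, (p : ℤ) ∣ (m ^ 2 - D) then 1 else -1

/-- Primitive forms of discriminant `D`. -/
def QDprim (D : ℤ) : Set (ℤ × ℤ × ℤ) :=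
  {q | q.2.1 ^ 2 - 4 * q.1 * q.2.2 = D ∧ Int.gcd q.1 (Int.gcd q.2.1 q.2.2) = 1}

/-- `F'_{1-k,D}`: the sum over primitive forms, with normalization `D^{(1-k)/2}`. -/
def Fprim (k : ℕ) (D : ℤ) (τ : ℂ) : ℂ :=
  (Dpow D ((1 - (k : ℝ)) / 2) / (((Nat.choose (2 * k - 2) (k - 1) : ℝ) * Real.pi : ℝ) : ℂ)) *
    ∑' q : QDprim D, Fsummand k D τ (q : ℤ × ℤ × ℤ)

/-- The root `η_Q = (-b+√D)/(2a)`. -/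
def etaQ (D : ℤ) (q : ℤ × ℤ × ℤ) : ℝ := (-(q.2.1 : ℝ) + Real.sqrt (D : ℝ)) / (2 * (q.1 : ℝ))

/-- The root `η'_Q = (-b-√D)/(2a)`. -/
def etaQ' (D : ℤ) (q : ℤ × ℤ × ℤ) : ℝ := (-(q.2.1 : ℝ) - Real.sqrt (D : ℝ)) / (2 * (q.1 : ℝ))

/-- The scaling matrix `A_Q`. -/
def AQ (D : ℤ) (q : ℤ × ℤ × ℤ) : Matrix (Fin 2) (Fin 2) ℝ :=
  (1 / Real.sqrt |etaQ D q - etaQ' D q|) •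
    !![1, -(etaQ' D q);
       -(Real.sign (etaQ D q - etaQ' D q)), Real.sign (etaQ D q - etaQ' D q) * etaQ D q]

/-- Real matrix associated to an element of `SL₂(ℤ)`. -/
def toR (γ : Matrix.SpecialLinearGroup (Fin 2) ℤ) : Matrix (Fin 2) (Fin 2) ℝ :=
  γ.1.map (fun n => (n : ℝ))

/-- Möbius action of a real `2×2` matrix on `ℂ`. -/
def moeb (g : Matrix (Fin 2) (Fin 2) ℝ) (τ : ℂ) : ℂ :=
  ((g 0 0 : ℝ) * τ + (g 0 1 : ℝ)) / ((g 1 0 : ℝ) * τ + (g 1 1 : ℝ))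

/-- Automorphy factor `j(g,τ) = cτ + d`. -/
def jfac (g : Matrix (Fin 2) (Fin 2) ℝ) (τ : ℂ) : ℂ :=
  ((g 1 0 : ℝ) : ℂ) * τ + ((g 1 1 : ℝ) : ℂ)

/-- `n`-th period `r_n(f) = ∫₀^∞ f(it) tⁿ dt`. -/
def periodR (f : ℂ → ℂ) (n : ℕ) : ℂ :=
  ∫ t in Set.Ioi (0 : ℝ), f ((t : ℂ) * Complex.I) * (t : ℂ) ^ n

/-- The even period polynomial `r⁺(f;X)`. -/
def rPlus (k : ℕ) (f : ℂ → ℂ) : Polynomial ℂ :=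
  ∑ m ∈ Finset.range k,
    Polynomial.C ((-1 : ℂ) ^ m * (Nat.choose (2 * k - 2) (2 * m) : ℂ) * periodR f (2 * m)) *
      Polynomial.X ^ (2 * k - 2 - 2 * m)

end

/-! On functions of the polar angle `θ = arctan (y / x)` the Euler operator `τ ∂/∂τ` acts as
`E = (2i)⁻¹ d/dθ`. Hence `∂/∂τ` sends `τ^a g(θ)` to `τ^(a-1) ((E + a) g)(θ)`, and the `m`-fold
iterate applies the falling factorial of `E + a`. For `a = n = k - 1`, `m = 2n + 1`, the factors are
symmetric about `0` and multiply to `E ∏_{j=1}^n (E² - j²) = E (-1/4)^n ∏_{j=1}^n (d²/dθ² + 4j²)`.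
Since `dφ/dθ = sin^{2n}` and `(d²/dθ² + m²) sin^m = m (m - 1) sin^{m-2}`, each factor lowers the
power of the sine by two, and the constant `(-1/4)^n (2n)! / (2i)` remains. -/

section

open Complex Filter Polynomial Topology
open scoped ContDiff

section Wirtinger

variable {F G : ℂ → ℂ} {τ : ℂ}

theorem wirD_eq_of_hasFDerivAt {L : ℂ →L[ℝ] ℂ} (h : HasFDerivAt F L τ) :
    wirD F τ = (L 1 - I * L I) / 2 := by
  have hτ : τ = τ.re + τ.im * I := (re_add_im τ).symm
  have horizontal : HasDerivAt (fun x : ℝ => (x : ℂ) + τ.im * I) 1 τ.re :=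
    (hasDerivAt_id τ.re).ofReal_comp.add_const _
  have vertical : HasDerivAt (fun y : ℝ => (τ.re : ℂ) + y * I) I τ.im := by
    simpa using ((hasDerivAt_id τ.im).ofReal_comp.mul_const I).const_add (τ.re : ℂ)
  have hdx : dxx F τ = L 1 := (h.comp_hasDerivAt_of_eq τ.re horizontal hτ).deriv
  have hdy : dyy F τ = L I := (h.comp_hasDerivAt_of_eq τ.im vertical hτ).deriv
  rw [wirD, hdx, hdy]

theorem wirD_eq_of_hasDerivAt {F' : ℂ} (h : HasDerivAt F F' τ) : wirD F τ = F' := by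
  rw [wirD_eq_of_hasFDerivAt h.complexToReal_fderiv]
  simp only [smul_apply, one_apply_eq_self, smul_eq_mul]
  linear_combination -(F' / 2) * I_mul_I

theorem wirD_mul (hF : DifferentiableAt ℝ F τ) (hG : DifferentiableAt ℝ G τ) :
    wirD (F * G) τ = wirD F τ * G τ + F τ * wirD G τ := by
  rw [wirD_eq_of_hasFDerivAt (hF.hasFDerivAt.mul hG.hasFDerivAt),
    wirD_eq_of_hasFDerivAt hF.hasFDerivAt, wirD_eq_of_hasFDerivAt hG.hasFDerivAt]
  simp only [add_apply, smul_apply, smul_eq_mul]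
  ring

theorem wirD_const_mul (c : ℂ) (F : ℂ → ℂ) :
    wirD (fun z => c * F z) = fun z => c * wirD F z := by
  ext τ
  simp only [wirD, dxx, dyy, deriv_const_mul_field]
  ring

theorem wirD_comp_ofReal {g : ℝ → ℂ} {u : ℂ → ℝ} (hg : DifferentiableAt ℝ g (u τ))
    (hu : DifferentiableAt ℝ u τ) :
    wirD (g ∘ u) τ = deriv g (u τ) * wirD (fun z => (u z : ℂ)) τ := by
  have hu' : HasFDerivAt (fun z => (u z : ℂ)) _ τ := ofRealCLM.hasFDerivAt.comp τ hu.hasFDerivAt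
  rw [wirD_eq_of_hasFDerivAt (hg.hasFDerivAt.comp τ hu.hasFDerivAt),
    wirD_eq_of_hasFDerivAt hu']
  simp only [ContinuousLinearMap.comp_apply, fderiv_eq_smul_deriv, real_smul, ofRealCLM_apply]
  ring

theorem wirD_congr (h : F =ᶠ[𝓝 τ] G) : wirD F =ᶠ[𝓝 τ] wirD G := by
  filter_upwards [h.eventuallyEq_nhds] with z hz
  have hz' : F =ᶠ[𝓝 ((z.re : ℂ) + z.im * I)] G := by rwa [re_add_im]
  have horizontal : ContinuousAt (fun x : ℝ => (x : ℂ) + z.im * I) z.re := by fun_prop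
  have vertical : ContinuousAt (fun y : ℝ => (z.re : ℂ) + y * I) z.im := by fun_prop
  have hdx : dxx F z = dxx G z := (hz'.comp_tendsto horizontal).deriv_eq
  have hdy : dyy F z = dyy G z := (hz'.comp_tendsto vertical).deriv_eq
  rw [wirD, wirD, hdx, hdy]

theorem wirD_iterate_congr (h : F =ᶠ[𝓝 τ] G) (m : ℕ) :
    wirD^[m] F =ᶠ[𝓝 τ] wirD^[m] G := by
  induction m with
  | zero => exact h
  | succ m ih =>
    simp only [Function.iterate_succ_apply']
    exact wirD_congr ih

theorem wirD_iterate_const_mul (c : ℂ) (F : ℂ → ℂ) (m : ℕ) :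
    wirD^[m] (fun z => c * F z) = fun z => c * wirD^[m] F z := by
  induction m with
  | zero => rfl
  | succ m ih => rw [Function.iterate_succ_apply', ih, wirD_const_mul, Function.iterate_succ_apply']

theorem Dop_iterate (F : ℂ → ℂ) (m : ℕ) :
    Dop^[m] F = fun z => (1 / (2 * (Real.pi : ℂ) * I)) ^ m * wirD^[m] F z := by
  induction m with
  | zero => simp
  | succ m ih =>
    ext τ
    rw [Function.iterate_succ_apply', ih, Dop, wirD_const_mul, Function.iterate_succ_apply']
    ring

end Wirtinger

section Angle

variable {τ : ℂ}

theorem differentiableAt_arctan_im_div_re (hτ : τ.re ≠ 0) :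
    DifferentiableAt ℝ (fun z : ℂ => Real.arctan (z.im / z.re)) τ :=
  (imCLM.differentiableAt.mul (reCLM.differentiableAt.inv hτ)).arctan

theorem dxx_arctan_im_div_re (hτ : τ.re ≠ 0) :
    dxx (fun z => (Real.arctan (z.im / z.re) : ℂ)) τ = ↑(-τ.im / normSq τ) := by
  have hnorm : τ.re ^ 2 + τ.im ^ 2 ≠ 0 := by positivity
  have h : HasDerivAt (fun x : ℝ => Real.arctan (τ.im / x)) (-τ.im / normSq τ) τ.re := by
    refine ((hasDerivAt_const τ.re τ.im).div (hasDerivAt_id' τ.re) hτ).arctan.congr_deriv ?_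
    simp only [normSq_apply, ← pow_two, Pi.div_apply]
    field_simp
    ring
  simpa [dxx] using h.ofReal_comp.deriv

theorem dyy_arctan_im_div_re (hτ : τ.re ≠ 0) :
    dyy (fun z => (Real.arctan (z.im / z.re) : ℂ)) τ = ↑(τ.re / normSq τ) := by
  have hnorm : τ.re ^ 2 + τ.im ^ 2 ≠ 0 := by positivity
  have h : HasDerivAt (fun y : ℝ => Real.arctan (y / τ.re)) (τ.re / normSq τ) τ.im := by
    refine ((hasDerivAt_id' τ.im).div_const τ.re).arctan.congr_deriv ?_
    simp only [normSq_apply, ← pow_two]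
    field_simp
  simpa [dyy] using h.ofReal_comp.deriv

theorem wirD_arctan_im_div_re (hτ : τ.re ≠ 0) :
    wirD (fun z => (Real.arctan (z.im / z.re) : ℂ)) τ = (2 * I * τ)⁻¹ := by
  rw [wirD, dxx_arctan_im_div_re hτ, dyy_arctan_im_div_re hτ, mul_inv, inv_def τ, mul_inv, inv_I]
  apply Complex.ext <;> simp <;> ring

end Angle

/-- The space of smooth functions `ℝ → ℂ` of the polar angle, the module on which polynomials in
the Euler operator act. -/
noncomputable def smoothFun : Submodule ℂ (ℝ → ℂ) where
  carrier := {g | ContDiff ℝ ∞ g}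
  add_mem' hf hg := ContDiff.add (Set.mem_ofPred.mp hf) (Set.mem_ofPred.mp hg)
  zero_mem' := Set.mem_ofPred.mpr contDiff_const
  smul_mem' _ _ hg := Set.mem_ofPred.mpr (contDiff_const.smul (Set.mem_ofPred.mp hg))

theorem contDiff_smoothFun (g : smoothFun) : ContDiff ℝ ∞ (g : ℝ → ℂ) := g.2

theorem differentiable_smoothFun (g : smoothFun) : Differentiable ℝ (g : ℝ → ℂ) :=
  (contDiff_smoothFun g).differentiable (by simp)

/-- Differentiation `d/dθ`, as an endomorphism of the smooth functions. -/
noncomputable def smoothDeriv : Module.End ℂ smoothFun where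
  toFun g := ⟨deriv g, (contDiff_infty_iff_deriv.mp (contDiff_smoothFun g)).2⟩
  map_add' f g := Subtype.ext <| funext fun θ =>
    deriv_add (differentiable_smoothFun f θ) (differentiable_smoothFun g θ)
  map_smul' c _ := Subtype.ext <| funext fun _ => deriv_const_smul_field c _

/-- The action `(2i)⁻¹ d/dθ` of the Euler operator `τ ∂/∂τ` on functions of the polar angle. -/
noncomputable def angularEuler : Module.End ℂ smoothFun := (2 * I)⁻¹ • smoothDeriv

/-- The function `τ ↦ τ^a g(θ)`, where `θ = arctan (y / x)`, i.e. the polar angle of `τ` modulo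
`π`. -/
noncomputable def polarFun (a : ℤ) (g : smoothFun) (τ : ℂ) : ℂ :=
  τ ^ a * (g : ℝ → ℂ) (Real.arctan (τ.im / τ.re))

theorem wirD_polarFun {τ : ℂ} (hτ : τ.re ≠ 0) (a : ℤ) (g : smoothFun) :
    wirD (polarFun a g) τ = polarFun (a - 1) ((angularEuler + algebraMap ℂ _ (a : ℂ)) g) τ := by
  have hτ0 : τ ≠ 0 := fun h => hτ (by rw [h, zero_re])
  have hpow := hasDerivAt_zpow a τ (Or.inl hτ0)
  have hangle := differentiableAt_arctan_im_div_re hτ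
  have hg := differentiable_smoothFun g (Real.arctan (τ.im / τ.re))
  have hsplit : polarFun a g =
      (fun z => z ^ a) * ((g : ℝ → ℂ) ∘ fun z => Real.arctan (z.im / z.re)) := rfl
  have heuler (θ : ℝ) : ((angularEuler + algebraMap ℂ _ (a : ℂ)) g : ℝ → ℂ) θ =
      (2 * I)⁻¹ * deriv g θ + a * (g : ℝ → ℂ) θ := rfl
  rw [hsplit, wirD_mul (hpow.differentiableAt.restrictScalars ℝ) (hg.comp τ hangle),
    wirD_eq_of_hasDerivAt hpow, wirD_comp_ofReal hg hangle, wirD_arctan_im_div_re hτ]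
  simp only [polarFun, heuler, Function.comp_apply, zpow_sub_one₀ hτ0]
  ring

theorem wirD_iterate_polarFun {τ : ℂ} (hτ : τ.re ≠ 0) (a : ℤ) (g : smoothFun) (m : ℕ) :
    wirD^[m] (polarFun a g) τ = polarFun (a - m)
      (aeval (angularEuler + algebraMap ℂ _ (a : ℂ)) (descPochhammer ℂ m) g) τ := by
  induction m generalizing τ with
  | zero => simp
  | succ m ih =>
    have hnear : ∀ᶠ z : ℂ in 𝓝 τ, z.re ≠ 0 := continuous_re.continuousAt.eventually_ne hτ
    have hm := wirD_congr (hnear.mono fun z hz => ih hz)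
    have hshift : angularEuler + algebraMap ℂ _ ((a - m : ℤ) : ℂ) =
        aeval (angularEuler + algebraMap ℂ _ (a : ℂ)) (X - (m : ℂ[X])) := by
      simp [← add_sub_assoc]
    rw [Function.iterate_succ_apply', hm.eq_of_nhds, wirD_polarFun hτ, hshift,
      descPochhammer_succ_right, mul_comm (descPochhammer ℂ m), map_mul, Module.End.mul_apply,
      Nat.cast_succ, sub_sub]

/-- The smooth function `sin^m`. -/
noncomputable def sinPow (m : ℕ) : smoothFun :=
  ⟨fun θ => Complex.sin θ ^ m, by
    have hsin : ContDiff ℝ ∞ fun θ : ℝ => Complex.sin θ :=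
      (Complex.contDiff_sin.restrict_scalars ℝ).comp ofRealCLM.contDiff
    exact hsin.pow m⟩

theorem coe_sinPow (m : ℕ) : (sinPow m : ℝ → ℂ) = fun θ : ℝ => Complex.sin θ ^ m := rfl

theorem smoothDeriv_smoothDeriv_sinPow (m : ℕ) :
    smoothDeriv (smoothDeriv (sinPow (m + 2))) =
      ((m + 2) * (m + 1) : ℂ) • sinPow m - ((m + 2) ^ 2 : ℂ) • sinPow (m + 2) := by
  have hsin (θ : ℝ) : HasDerivAt (fun x : ℝ => Complex.sin x) (Complex.cos θ) θ :=
    (Complex.hasDerivAt_sin θ).comp_ofReal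
  have hcos (θ : ℝ) : HasDerivAt (fun x : ℝ => Complex.cos x) (-Complex.sin θ) θ :=
    (Complex.hasDerivAt_cos θ).comp_ofReal
  have hfirst : deriv (sinPow (m + 2) : ℝ → ℂ) =
      fun θ : ℝ => (m + 2) * (Complex.sin θ ^ (m + 1) * Complex.cos θ) := by
    ext θ
    rw [coe_sinPow, ((hsin θ).fun_pow (m + 2)).deriv]
    push_cast
    ring_nf
  have hsecond (θ : ℝ) :
      deriv (fun x : ℝ => (m + 2) * (Complex.sin x ^ (m + 1) * Complex.cos x)) θ =
        (m + 2) * ((m + 1) * Complex.sin θ ^ m * Complex.cos θ * Complex.cos θ +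
          Complex.sin θ ^ (m + 1) * -Complex.sin θ) := by
    simpa using (((hsin θ).fun_pow (m + 1)).fun_mul (hcos θ)).const_mul (m + 2 : ℂ) |>.deriv
  ext θ
  calc deriv (deriv (sinPow (m + 2) : ℝ → ℂ)) θ
    _ = (m + 2) * (m + 1) * Complex.sin θ ^ m - (m + 2) ^ 2 * Complex.sin θ ^ (m + 2) := by
      rw [hfirst, hsecond]
      linear_combination (m + 2 : ℂ) * (m + 1) * Complex.sin θ ^ m * Complex.sin_sq_add_cos_sq θ

theorem angularEuler_sq_sub_sq_sinPow (n : ℕ) :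
    aeval angularEuler ((X : ℂ[X]) ^ 2 - ((n : ℂ[X]) + 1) ^ 2) (sinPow (2 * n + 2)) =
      (-1 / 4 * ((2 * n + 2) * (2 * n + 1)) : ℂ) • sinPow (2 * n) := by
  have hI : ((2 * I)⁻¹ * (2 * I)⁻¹ : ℂ) = -1 / 4 := by
    rw [← mul_inv, show 2 * I * (2 * I) = -4 by linear_combination 4 * I_mul_I]; norm_num
  have h : aeval angularEuler ((X : ℂ[X]) ^ 2 - ((n : ℂ[X]) + 1) ^ 2) (sinPow (2 * n + 2)) =
      ((2 * I)⁻¹ * (2 * I)⁻¹) • smoothDeriv (smoothDeriv (sinPow (2 * n + 2))) -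
        ((n : ℂ) + 1) ^ 2 • sinPow (2 * n + 2) := by
    have hC : (n : ℂ[X]) + 1 = C ((n : ℂ) + 1) := by simp
    rw [hC, ← C_pow, map_sub, aeval_C, pow_two X, map_mul, aeval_X]
    simp only [LinearMap.sub_apply, Module.End.mul_apply, angularEuler,
      LinearMap.smul_apply, map_smul, smul_smul, Module.algebraMap_end_apply]
  rw [h, hI, smoothDeriv_smoothDeriv_sinPow]
  push_cast
  module

theorem prod_angularEuler_sq_sub_sq_sinPow (n : ℕ) :
    aeval angularEuler (∏ j ∈ Finset.range n, ((X : ℂ[X]) ^ 2 - ((j : ℂ[X]) + 1) ^ 2))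
      (sinPow (2 * n)) = ((-1 / 4) ^ n * (2 * n).factorial : ℂ) • sinPow 0 := by
  induction n with
  | zero => simp
  | succ n ih =>
    rw [Finset.prod_range_succ, map_mul, Module.End.mul_apply, mul_add_one,
      angularEuler_sq_sub_sq_sinPow, map_smul, ih, smul_smul, Nat.factorial_succ,
      Nat.factorial_succ]
    push_cast
    congr 1
    ring

theorem descPochhammer_comp_X_add_natCast (R : Type*) [CommRing R] (n : ℕ) :
    (descPochhammer R (2 * n + 1)).comp (X + (n : R[X])) =
      X * ∏ j ∈ Finset.range n, (X ^ 2 - ((j : R[X]) + 1) ^ 2) := by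
  induction n with
  | zero => simp
  | succ n ih =>
    have hshift : (X - 1 : R[X]).comp (X + ((n + 1 : ℕ) : R[X])) = X + (n : R[X]) := by
      simp [add_sub_assoc]
    rw [mul_add_one, descPochhammer_succ_left, mul_comp, X_comp, comp_assoc, hshift,
      descPochhammer_succ_right, mul_comp, ih, Finset.prod_range_succ]
    simp only [Nat.cast_add, Nat.cast_one, Nat.cast_mul, Nat.cast_ofNat, sub_comp, X_comp, add_comp,
      mul_comp, ofNat_comp, natCast_comp, one_comp]
    ring

theorem phi_neg (k : ℕ) (v : ℝ) : phi k (-v) = -phi k v := by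
  have heven : Even (2 * k - 2) := ⟨k - 1, by lia⟩
  rw [phi, phi, intervalIntegral.integral_symm, ← neg_zero, ← intervalIntegral.integral_comp_neg]
  simp [Real.sin_neg, heven.neg_pow]

theorem hasDerivAt_phi (k : ℕ) (v : ℝ) : HasDerivAt (phi k) (Real.sin v ^ (2 * k - 2)) v :=
  have hcont : Continuous fun u => Real.sin u ^ (2 * k - 2) := by fun_prop
  intervalIntegral.integral_hasDerivAt_right (hcont.intervalIntegrable _ _)
    (hcont.stronglyMeasurableAtFilter _ _) hcont.continuousAt

-- At `x = 0` both sides vanish, because `y / 0 = 0`.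
theorem phiHat_eq (k : ℕ) (τ : ℂ) : phiHat k τ =
    Real.sign τ.im * (τ ^ (k - 1) * phi k (Real.arctan (τ.im / τ.re))) := by
  have hzero : phi k 0 = 0 := intervalIntegral.integral_same
  rcases lt_trichotomy τ.re 0 with hx | hx | hx <;>
  rcases lt_trichotomy τ.im 0 with hy | hy | hy <;>
  simp [phiHat, hx, hy, abs_div, abs_of_neg, abs_of_pos, Real.sign_of_neg, Real.sign_of_pos, hzero,
    neg_div, div_neg, Real.arctan_neg, phi_neg]

/-- The smooth function `φ` of index `k`. -/
noncomputable def smoothPhi (k : ℕ) : smoothFun :=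
  ⟨fun θ => (phi k θ : ℂ), Set.mem_ofPred.mpr <| contDiff_infty_iff_deriv.mpr
    ⟨fun θ => (hasDerivAt_phi k θ).ofReal_comp.differentiableAt, by
      rw [funext fun θ => (hasDerivAt_phi k θ).ofReal_comp.deriv]
      exact ofRealCLM.contDiff.comp (Real.contDiff_sin.pow _)⟩⟩

theorem coe_smoothPhi (k : ℕ) : (smoothPhi k : ℝ → ℂ) = fun θ => (phi k θ : ℂ) := rfl

theorem smoothDeriv_smoothPhi (k : ℕ) : smoothDeriv (smoothPhi k) = sinPow (2 * k - 2) := by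
  ext θ
  calc deriv (fun θ => (phi k θ : ℂ)) θ
    _ = ((Real.sin θ ^ (2 * k - 2) : ℝ) : ℂ) := (hasDerivAt_phi k θ).ofReal_comp.deriv
    _ = Complex.sin θ ^ (2 * k - 2) := by simp

theorem wirD_iterate_polarFun_smoothPhi (n : ℕ) {τ : ℂ} (hτ : τ.re ≠ 0) :
    wirD^[2 * n + 1] (polarFun n (smoothPhi (n + 1))) τ =
      (2 * I)⁻¹ * ((-1 / 4) ^ n * (2 * n).factorial) * τ ^ (-((n + 1 : ℕ) : ℤ)) := by
  have hE : angularEuler (smoothPhi (n + 1)) = (2 * I)⁻¹ • sinPow (2 * n) := by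
    rw [angularEuler, LinearMap.smul_apply, smoothDeriv_smoothPhi]; rfl
  have hcomp : aeval (angularEuler + algebraMap ℂ _ ((n : ℤ) : ℂ)) (descPochhammer ℂ (2 * n + 1)) =
      aeval angularEuler ((descPochhammer ℂ (2 * n + 1)).comp (X + (n : ℂ[X]))) := by
    simp [aeval_comp]
  rw [wirD_iterate_polarFun hτ, hcomp, descPochhammer_comp_X_add_natCast, mul_comm X, map_mul,
    Module.End.mul_apply, aeval_X, hE, map_smul, prod_angularEuler_sq_sub_sq_sinPow]
  have hexp : (n : ℤ) - (2 * n + 1 : ℕ) = -((n + 1 : ℕ) : ℤ) := by push_cast; ring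
  simp only [polarFun, hexp, Submodule.coe_smul, Pi.smul_apply, coe_sinPow, smul_eq_mul, pow_zero]
  ring

theorem phiHat_eventuallyEq_polarFun (n : ℕ) {τ : ℂ} (hτ : τ.im ≠ 0) :
    phiHat (n + 1) =ᶠ[𝓝 τ]
      fun z => (Real.sign τ.im : ℂ) * polarFun n (smoothPhi (n + 1)) z := by
  have hsign : ∀ᶠ z : ℂ in 𝓝 τ, Real.sign z.im = Real.sign τ.im := by
    rcases hτ.lt_or_gt with h | h
    · filter_upwards [continuous_im.continuousAt.eventually_lt_const h] with z hz
      rw [Real.sign_of_neg hz, Real.sign_of_neg h]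
    · filter_upwards [continuous_im.continuousAt.eventually_const_lt h] with z hz
      rw [Real.sign_of_pos hz, Real.sign_of_pos h]
  filter_upwards [hsign] with z hz
  rw [phiHat_eq, hz, polarFun, zpow_natCast, Nat.add_sub_cancel, coe_smoothPhi]

theorem one_div_two_pi_I_pow_mul (n : ℕ) :
    (1 / (2 * (Real.pi : ℂ) * I)) ^ (2 * n + 1) * ((2 * I)⁻¹ * (-1 / 4) ^ n) =
      -(1 / (4 * (Real.pi : ℂ)) ^ (2 * n + 1)) := by
  have hπ : (Real.pi : ℂ) ≠ 0 := ofReal_ne_zero.mpr Real.pi_ne_zero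
  have hsq : (1 / (2 * (Real.pi : ℂ) * I)) ^ 2 * (-1 / 4) = (1 / (4 * (Real.pi : ℂ))) ^ 2 := by
    field_simp
    rw [I_sq]
    norm_num
  have hone : 1 / (2 * (Real.pi : ℂ) * I) * (2 * I)⁻¹ = -(1 / (4 * (Real.pi : ℂ))) := by
    field_simp
    rw [I_sq]
    norm_num
  calc (1 / (2 * (Real.pi : ℂ) * I)) ^ (2 * n + 1) * ((2 * I)⁻¹ * (-1 / 4) ^ n)
    _ = ((1 / (2 * (Real.pi : ℂ) * I)) ^ 2 * (-1 / 4)) ^ n *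
        (1 / (2 * (Real.pi : ℂ) * I) * (2 * I)⁻¹) := by rw [mul_pow, ← pow_mul]; ring
    _ = -(1 / (4 * (Real.pi : ℂ)) ^ (2 * n + 1)) := by
      rw [hsq, hone, ← pow_mul, mul_neg, ← pow_succ, one_div_pow]

theorem stmt7_general (k : ℕ) (hk : 1 ≤ k) (τ : ℂ) (hx : τ.re ≠ 0) (hy : τ.im ≠ 0) :
    (Dop^[2 * k - 1] (phiHat k)) τ = Real.sign τ.im *
      (-((Nat.factorial (2 * k - 2) : ℂ) / (((4 * Real.pi) ^ (2 * k - 1) : ℝ) : ℂ)) *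
        τ ^ (-(k : ℤ))) := by
  obtain ⟨n, rfl⟩ : ∃ n, k = n + 1 := ⟨k - 1, by lia⟩
  rw [show 2 * (n + 1) - 1 = 2 * n + 1 by lia, show 2 * (n + 1) - 2 = 2 * n by lia,
    congrFun (Dop_iterate _ _) τ,
    (wirD_iterate_congr (phiHat_eventuallyEq_polarFun n hy) _).eq_of_nhds,
    congrFun (wirD_iterate_const_mul _ _ _) τ,
    wirD_iterate_polarFun_smoothPhi n hx]
  simp only [ofReal_pow, ofReal_mul, ofReal_ofNat]
  linear_combination (Real.sign τ.im : ℂ) * (2 * n).factorial * τ ^ (-((n + 1 : ℕ) : ℤ)) *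
    one_div_two_pi_I_pow_mul n

end

theorem stmt7 (k : ℕ) (hk : 2 ≤ k) (τ : ℂ) (hτ : 0 < τ.im) (hx : τ.re ≠ 0) :
    (Dop^[2 * k - 1] (phiHat k)) τ =
      -((Nat.factorial (2 * k - 2) : ℂ) / (((4 * Real.pi) ^ (2 * k - 1) : ℝ) : ℂ)) *
        τ ^ (-(k : ℤ)) := by
  rw [stmt7_general k (by lia) τ hx hτ.ne', Real.sign_of_pos hτ, Complex.ofReal_one, one_mul]
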